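/- Let Ψ(c,x) = 320 + ψ1(c) + ψ2(c)x + ψ3(c)x² + ψ4(c)x³ + ψ5(c)x⁴. Then Ψ(c,x) ≤ 320 for all real c, x with 0 ≤ c ≤ 2 and 0 ≤ x ≤ 1. -/

import Mathlib

/-!
For fixed `c`, expand `320 - Ψ(c, x)` in the Bernstein basis `xⁱ (1 - x)⁴⁻ⁱ`. Only the coefficient
of `x (1 - x)³` can be negative; it is at least `-32 c`, while those of `(1 - x)⁴` and `x² (1 - x)²`
are at least `16 c²` and `16`, so these three terms dominate
`16 (1 - x)² (c (1 - x) - x)² ≥ 0`.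

For each coefficient, the part odd in `c` vanishes at `c = ± 2`: it is `-c (4 - c²) F(c²)` with `F`
nonnegative on `[0, 4]`. The inequality `c ≤ (1 + c²) / 2`, in the form of the square `(c - 1)²`,
then reduces a lower bound to a polynomial inequality in `c² ∈ [0, 4]`.
-/

section BernsteinForm

variable {R : Type*} [CommRing R] [LinearOrder R] [IsStrictOrderedRing R]

lemma binary_quartic_nonneg {b₀ b₁ b₂ b₃ b₄ p q x y : R} (h₀ : p ^ 2 ≤ b₀)
    (h₁ : -(2 * p * q) ≤ b₁) (h₂ : q ^ 2 ≤ b₂) (h₃ : 0 ≤ b₃) (h₄ : 0 ≤ b₄)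
    (hx : 0 ≤ x) (hy : 0 ≤ y) :
    0 ≤ b₀ * y ^ 4 + b₁ * (x * y ^ 3) + b₂ * (x ^ 2 * y ^ 2) + b₃ * (x ^ 3 * y) + b₄ * x ^ 4 :=
  calc
    0 ≤ y ^ 2 * (p * y - q * x) ^ 2 + b₃ * (x ^ 3 * y) + b₄ * x ^ 4 := by positivity
    _ = p ^ 2 * y ^ 4 + -(2 * p * q) * (x * y ^ 3) + q ^ 2 * (x ^ 2 * y ^ 2)
          + b₃ * (x ^ 3 * y) + b₄ * x ^ 4 := by ring
    _ ≤ _ := by gcongr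

lemma quartic_nonneg_of_bernstein_coeffs {a₀ a₁ a₂ a₃ a₄ p q x : R} (h₀ : p ^ 2 ≤ a₀)
    (h₁ : -(2 * p * q) ≤ 4 * a₀ + a₁) (h₂ : q ^ 2 ≤ 6 * a₀ + 3 * a₁ + a₂)
    (h₃ : 0 ≤ 4 * a₀ + 3 * a₁ + 2 * a₂ + a₃) (h₄ : 0 ≤ a₀ + a₁ + a₂ + a₃ + a₄)
    (hx₀ : 0 ≤ x) (hx₁ : x ≤ 1) :
    0 ≤ a₀ + a₁ * x + a₂ * x ^ 2 + a₃ * x ^ 3 + a₄ * x ^ 4 := by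
  convert binary_quartic_nonneg h₀ h₁ h₂ h₃ h₄ hx₀ (sub_nonneg.mpr hx₁) using 1
  ring

end BernsteinForm

/-- The coefficient `ψ₁(c)` of `x⁰` in `Ψ(c, x) - 320`. -/
noncomputable def psi₁ (c : ℝ) : ℝ :=
  -160 * c ^ 2 + 16 * c ^ 3 + 20 * c ^ 4 - 4 * c ^ 5 + (5 / 4) * c ^ 6

/-- The coefficient `ψ₂(c)` of `x` in `Ψ(c, x)`. -/
noncomputable def psi₂ (c : ℝ) : ℝ :=
  32 * c + 48 * c ^ 2 + 32 * c ^ 3 + 14 * c ^ 4 - 10 * c ^ 5 - (13 / 2) * c ^ 6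

/-- The coefficient `ψ₃(c)` of `x²` in `Ψ(c, x)`. -/
noncomputable def psi₃ (c : ℝ) : ℝ :=
  -256 + 64 * c + 276 * c ^ 2 - 48 * c ^ 3 - 82 * c ^ 4 + 8 * c ^ 5 + (29 / 4) * c ^ 6

/-- The coefficient `ψ₄(c)` of `x³` in `Ψ(c, x)`. -/
noncomputable def psi₄ (c : ℝ) : ℝ :=
  320 - 32 * c - 272 * c ^ 2 - 32 * c ^ 3 + 76 * c ^ 4 + 10 * c ^ 5 - 7 * c ^ 6

/-- The coefficient `ψ₅(c)` of `x⁴` in `Ψ(c, x)`. -/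
noncomputable def psi₅ (c : ℝ) : ℝ :=
  -64 - 64 * c + 48 * c ^ 2 + 32 * c ^ 3 - 12 * c ^ 4 - 4 * c ^ 5 + c ^ 6

/-- The polynomial `Ψ(c, x)`, quartic in `x`. -/
noncomputable def Psi (c x : ℝ) : ℝ :=
  320 + psi₁ c + psi₂ c * x + psi₃ c * x ^ 2 + psi₄ c * x ^ 3 + psi₅ c * x ^ 4

section Coefficients

variable {c : ℝ}

lemma psi₁_le (hc : c ^ 2 ≤ 4) : psi₁ c ≤ -(16 * c ^ 2) := by
  have : 0 ≤ 4 - c ^ 2 := sub_nonneg.mpr hc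
  have gap_eq : -(16 * c ^ 2) - psi₁ c =
      c ^ 2 * (2 * (4 - c ^ 2) * (c - 1) ^ 2 + 26 * (4 - c ^ 2) + 3 / 4 * c ^ 4 + 32) := by
    unfold psi₁
    ring
  rw [← sub_nonneg, gap_eq]
  positivity

lemma four_psi₁_add_psi₂_le (hc : c ^ 2 ≤ 4) : 4 * psi₁ c + psi₂ c ≤ 32 * c := by
  have : 0 ≤ 4 - c ^ 2 := sub_nonneg.mpr hc
  -- Adding `32 c` leaves an extra odd term `8 c³`, absorbed by `(c + 1) ^ 2`.
  have gap_eq : 32 * c - (4 * psi₁ c + psi₂ c) =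
      c ^ 2 * (13 * (4 - c ^ 2) * (c - 1) ^ 2 + 4 * (c + 1) ^ 2
        + 29 / 2 * (4 - c ^ 2) ^ 2 + 21 * (4 - c ^ 2) + 220) := by
    unfold psi₁ psi₂
    ring
  rw [← sub_nonneg, gap_eq]
  positivity

lemma six_psi₁_add_three_psi₂_add_psi₃_le (hc : c ^ 2 ≤ 4) :
    6 * psi₁ c + 3 * psi₂ c + psi₃ c ≤ -16 := by
  have : 0 ≤ 4 - c ^ 2 := sub_nonneg.mpr hc
  have gap_eq : -16 - (6 * psi₁ c + 3 * psi₂ c + psi₃ c) =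
      (4 - c ^ 2) * (20 + 23 * c ^ 2) * (c - 1) ^ 2 + 160
        + c ^ 2 * (111 / 4 * (c ^ 2 - 2) ^ 2 + 18 * (4 - c ^ 2) + 205) := by
    unfold psi₁ psi₂ psi₃
    ring
  rw [← sub_nonneg, gap_eq]
  positivity

lemma four_psi₁_add_three_psi₂_add_two_psi₃_add_psi₄_nonpos (hc : c ^ 2 ≤ 4) :
    4 * psi₁ c + 3 * psi₂ c + 2 * psi₃ c + psi₄ c ≤ 0 := by
  have : 0 ≤ 4 - c ^ 2 := sub_nonneg.mpr hc
  have gap_eq : 0 - (4 * psi₁ c + 3 * psi₂ c + 2 * psi₃ c + psi₄ c) =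
      (4 - c ^ 2) * (24 + 10 * c ^ 2) * (c - 1) ^ 2 + 96
        + c ^ 2 * (17 * (c ^ 2 - 1) ^ 2 + 6 * (4 - c ^ 2) + 63) := by
    unfold psi₁ psi₂ psi₃ psi₄
    ring
  rw [← sub_nonneg, gap_eq]
  positivity

lemma sum_psi_nonpos (c : ℝ) : psi₁ c + psi₂ c + psi₃ c + psi₄ c + psi₅ c ≤ 0 := by
  have gap_eq : 0 - (psi₁ c + psi₂ c + psi₃ c + psi₄ c + psi₅ c) =
      4 * c ^ 2 * ((c ^ 2 - 2) ^ 2 + 11) := by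
    unfold psi₁ psi₂ psi₃ psi₄ psi₅
    ring
  rw [← sub_nonneg, gap_eq]
  positivity

end Coefficients

theorem Psi_le_320_general {c x : ℝ} (hc : |c| ≤ 2) (hx₀ : 0 ≤ x) (hx₁ : x ≤ 1) :
    Psi c x ≤ 320 := by
  have hc_sq : c ^ 2 ≤ 4 := by linarith [sq_le_sq' (abs_le.mp hc).1 (abs_le.mp hc).2]
  have deficit_nonneg : 0 ≤ -psi₁ c + -psi₂ c * x + -psi₃ c * x ^ 2 + -psi₄ c * x ^ 3
      + -psi₅ c * x ^ 4 := by
    apply quartic_nonneg_of_bernstein_coeffs (p := 4 * c) (q := 4) _ _ _ _ _ hx₀ hx₁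
    · linarith [psi₁_le hc_sq]
    · linarith [four_psi₁_add_psi₂_le hc_sq]
    · linarith [six_psi₁_add_three_psi₂_add_psi₃_le hc_sq]
    · linarith [four_psi₁_add_three_psi₂_add_two_psi₃_add_psi₄_nonpos hc_sq]
    · linarith [sum_psi_nonpos c]
  unfold Psi
  linarith

theorem Psi_le_320 (c x : ℝ) (hc0 : 0 ≤ c) (hc1 : c ≤ 2)
    (hx0 : 0 ≤ x) (hx1 : x ≤ 1) :
    320 + (-160 * c ^ 2 + 16 * c ^ 3 + 20 * c ^ 4 - 4 * c ^ 5 + (5 / 4) * c ^ 6) +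
      (32 * c + 48 * c ^ 2 + 32 * c ^ 3 + 14 * c ^ 4 - 10 * c ^ 5 - (13 / 2) * c ^ 6) * x +
      (-256 + 64 * c + 276 * c ^ 2 - 48 * c ^ 3 - 82 * c ^ 4 + 8 * c ^ 5 + (29 / 4) * c ^ 6) * x ^ 2 +
      (320 - 32 * c - 272 * c ^ 2 - 32 * c ^ 3 + 76 * c ^ 4 + 10 * c ^ 5 - 7 * c ^ 6) * x ^ 3 +
      (-64 - 64 * c + 48 * c ^ 2 + 32 * c ^ 3 - 12 * c ^ 4 - 4 * c ^ 5 + c ^ 6) * x ^ 4 ≤ 320 :=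
  Psi_le_320_general (abs_le.mpr ⟨by linarith, hc1⟩) hx0 hx1
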